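/- Let n ≥ 1. There exists a constant C′ > 0 depending only on n with the following property: for every T > 0, every smooth positive function u : ℝⁿ × (0,T] → (0,∞) satisfying the heat equation ∂u/∂t = Δu, every β > 1, all x₁, x₂ ∈ ℝⁿ and all 0 < t₁ < t₂ ≤ T, one has u(x₂,t₂) ≥ u(x₁,t₁) · (t₂/t₁)^{−C′β} · exp( −β·‖x₂ − x₁‖² / (4(t₂ − t₁)) ). -/

import Mathlib

/-- The Euclidean Laplacian of `f : ℝⁿ → ℝ` at `x`: the trace of the Hessian,
computed as the sum of the second partial derivatives in the coordinate directions. -/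
noncomputable def laplacian {n : ℕ} (f : EuclideanSpace ℝ (Fin n) → ℝ)
    (x : EuclideanSpace ℝ (Fin n)) : ℝ :=
  ∑ i, fderiv ℝ (fun y => fderiv ℝ f y (EuclideanSpace.single i 1)) x
    (EuclideanSpace.single i 1)

/-!
For a positive solution `u` of the heat equation, `f = log u` satisfies `∂ₜf = Δf + |∇f|²`. For
`β > 1` put `F = |∇f|² - β ∂ₜf`. Bochner's formula gives `(Δ - ∂ₜ)F = 2|∇²f|² - 2⟨∇f, ∇F⟩`, and
`n|∇²f|² ≥ (Δf)²`, where `-βΔf = F + (β - 1)|∇f|²`, makes the right-hand side quadratic in `F`.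
At a maximum of `(t - δ) w² F`, with `w` a cutoff on a large ball, this bounds `t F` by `nβ²/2` up
to errors that vanish as the radius grows. Letting `β → 1` yields `t (|∇f|² - ∂ₜf) ≤ n/2`, and
integrating `f` along the segment from `(x₁, t₁)` to `(x₂, t₂)`, after completing the square, gives
the inequality for `β = 1`, which is the strongest one.
-/

open Set Filter
open scoped Topology RealInnerProductSpace Laplacian

section DirectionalDerivative

variable {P : Type*} [NormedAddCommGroup P] [NormedSpace ℝ P] {p : P} {g h : P → ℝ}

/-- The directional derivative `∂ᵥ g`, as a function of the base point so that it can be iterated.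
It has the junk value `0` where `g` is not differentiable. -/
noncomputable def dirDeriv (v : P) (g : P → ℝ) (p : P) : ℝ :=
  fderiv ℝ g p v

lemma contDiffAt_dirDeriv {m n : WithTop ℕ∞} (hg : ContDiffAt ℝ n g p) (hmn : m + 1 ≤ n) (v : P) :
    ContDiffAt ℝ m (dirDeriv v g) p :=
  (hg.fderiv_right hmn).clm_apply contDiffAt_const

lemma dirDeriv_congr (hgh : g =ᶠ[𝓝 p] h) (v : P) : dirDeriv v g p = dirDeriv v h p := by
  simp only [dirDeriv, hgh.fderiv_eq]

lemma dirDeriv_neg (v : P) (g : P → ℝ) : dirDeriv v (fun q => -g q) = fun q => -dirDeriv v g q := by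
  ext q
  simp only [dirDeriv, fderiv_fun_neg, neg_apply]

lemma dirDeriv_add (hg : DifferentiableAt ℝ g p) (hh : DifferentiableAt ℝ h p) (v : P) :
    dirDeriv v (fun q => g q + h q) p = dirDeriv v g p + dirDeriv v h p := by
  simp only [dirDeriv, fderiv_fun_add hg hh, add_apply]

lemma dirDeriv_sub (hg : DifferentiableAt ℝ g p) (hh : DifferentiableAt ℝ h p) (v : P) :
    dirDeriv v (fun q => g q - h q) p = dirDeriv v g p - dirDeriv v h p := by
  simp only [dirDeriv, fderiv_fun_sub hg hh, sub_apply]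

lemma dirDeriv_sum {ι : Type*} {s : Finset ι} {g : ι → P → ℝ}
    (hg : ∀ i ∈ s, DifferentiableAt ℝ (g i) p) (v : P) :
    dirDeriv v (fun q => ∑ i ∈ s, g i q) p = ∑ i ∈ s, dirDeriv v (g i) p := by
  simp only [dirDeriv, fderiv_fun_sum hg, sum_apply]

lemma dirDeriv_const_mul (c : ℝ) (v : P) (g : P → ℝ) :
    dirDeriv v (fun q => c * g q) = fun q => c * dirDeriv v g q := by
  ext q
  exact congrArg (· v) (congrFun (fderiv_const_smul_field (𝕜 := ℝ) (f := g) c) q)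

lemma dirDeriv_mul (hg : DifferentiableAt ℝ g p) (hh : DifferentiableAt ℝ h p) (v : P) :
    dirDeriv v (fun q => g q * h q) p = dirDeriv v g p * h p + g p * dirDeriv v h p := by
  simp only [dirDeriv, fderiv_fun_mul hg hh, add_apply, smul_apply, smul_eq_mul]
  ring

lemma differentiableAt_dirDeriv (hg : ContDiffAt ℝ 2 g p) (v : P) :
    DifferentiableAt ℝ (dirDeriv v g) p :=
  (contDiffAt_dirDeriv hg (m := 1) (by norm_num) v).differentiableAt one_ne_zero

lemma eventually_differentiableAt (hg : ContDiffAt ℝ 2 g p) :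
    ∀ᶠ q in 𝓝 p, DifferentiableAt ℝ g q :=
  (hg.eventually (by decide)).mono fun _ hq => hq.differentiableAt two_ne_zero

lemma dirDeriv_dirDeriv_sub (hg : ContDiffAt ℝ 2 g p) (hh : ContDiffAt ℝ 2 h p) (v : P) :
    dirDeriv v (dirDeriv v fun q => g q - h q) p =
      dirDeriv v (dirDeriv v g) p - dirDeriv v (dirDeriv v h) p := by
  have first_order : dirDeriv v (fun q => g q - h q) =ᶠ[𝓝 p]
      fun q => dirDeriv v g q - dirDeriv v h q := by
    filter_upwards [eventually_differentiableAt hg, eventually_differentiableAt hh] with q hgq hhq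
    exact dirDeriv_sub hgq hhq v
  rw [dirDeriv_congr first_order,
    dirDeriv_sub (differentiableAt_dirDeriv hg v) (differentiableAt_dirDeriv hh v)]

lemma dirDeriv_dirDeriv_sum {ι : Type*} {s : Finset ι} {g : ι → P → ℝ}
    (hg : ∀ i ∈ s, ContDiffAt ℝ 2 (g i) p) (v : P) :
    dirDeriv v (dirDeriv v fun q => ∑ i ∈ s, g i q) p =
      ∑ i ∈ s, dirDeriv v (dirDeriv v (g i)) p := by
  have first_order : dirDeriv v (fun q => ∑ i ∈ s, g i q) =ᶠ[𝓝 p]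
      fun q => ∑ i ∈ s, dirDeriv v (g i) q := by
    filter_upwards [(eventually_all_finset s).2 fun i hi => eventually_differentiableAt (hg i hi)]
      with q hq
    exact dirDeriv_sum hq v
  rw [dirDeriv_congr first_order,
    dirDeriv_sum (fun i hi => differentiableAt_dirDeriv (hg i hi) v)]

lemma dirDeriv_dirDeriv_mul (hg : ContDiffAt ℝ 2 g p) (hh : ContDiffAt ℝ 2 h p) (v : P) :
    dirDeriv v (dirDeriv v fun q => g q * h q) p =
      dirDeriv v (dirDeriv v g) p * h p + 2 * (dirDeriv v g p * dirDeriv v h p) +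
        g p * dirDeriv v (dirDeriv v h) p := by
  have hg₁ := hg.differentiableAt two_ne_zero
  have hh₁ := hh.differentiableAt two_ne_zero
  have hDg := differentiableAt_dirDeriv hg v
  have hDh := differentiableAt_dirDeriv hh v
  have first_order : dirDeriv v (fun q => g q * h q) =ᶠ[𝓝 p]
      fun q => dirDeriv v g q * h q + g q * dirDeriv v h q := by
    filter_upwards [eventually_differentiableAt hg, eventually_differentiableAt hh] with q hgq hhq
    exact dirDeriv_mul hgq hhq v
  rw [dirDeriv_congr first_order, dirDeriv_add (hDg.fun_mul hh₁) (hg₁.fun_mul hDh),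
    dirDeriv_mul hDg hh₁, dirDeriv_mul hg₁ hDh]
  ring

lemma dirDeriv_dirDeriv_eq_fderiv_fderiv (hg : ContDiffAt ℝ 2 g p) (v w : P) :
    dirDeriv v (dirDeriv w g) p = fderiv ℝ (fderiv ℝ g) p v w := by
  have hdiff : DifferentiableAt ℝ (fderiv ℝ g) p :=
    (hg.fderiv_right (m := 1) (by norm_num)).differentiableAt one_ne_zero
  exact congrArg (· v)
    ((ContinuousLinearMap.apply ℝ ℝ w).hasFDerivAt.comp p hdiff.hasFDerivAt).fderiv

lemma dirDeriv_comm (hg : ContDiffAt ℝ 2 g p) (v w : P) :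
    dirDeriv v (dirDeriv w g) p = dirDeriv w (dirDeriv v g) p := by
  rw [dirDeriv_dirDeriv_eq_fderiv_fderiv hg, dirDeriv_dirDeriv_eq_fderiv_fderiv hg]
  exact hg.isSymmSndFDerivAt (by simp) v w

lemma dirDeriv_dirDeriv_dirDeriv_comm (hg : ContDiffAt ℝ 3 g p) (v w : P) :
    dirDeriv w (dirDeriv w (dirDeriv v g)) p = dirDeriv v (dirDeriv w (dirDeriv w g)) p := by
  have inner_comm : dirDeriv w (dirDeriv v g) =ᶠ[𝓝 p] dirDeriv v (dirDeriv w g) :=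
    (hg.eventually (by decide)).mono fun q hq => dirDeriv_comm (hq.of_le (by norm_num)) w v
  rw [dirDeriv_congr inner_comm,
    dirDeriv_comm (contDiffAt_dirDeriv hg (m := 2) (by norm_num) w)]

end DirectionalDerivative

section Bochner

variable {P ι : Type*} [NormedAddCommGroup P] [NormedSpace ℝ P] [Fintype ι]
  {e : ι → P} {τ p : P} {f g h : P → ℝ} {β : ℝ}

/-- The sum of squares `∑ᵢ ∂ᵢ∂ᵢ g` along a finite family `e` of directions; it is the Laplacian
in the space variables when `e` is an orthonormal frame of space inside space-time. -/
noncomputable def frameLaplacian (e : ι → P) (g : P → ℝ) (p : P) : ℝ :=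
  ∑ i, dirDeriv (e i) (dirDeriv (e i) g) p

/-- The heat operator `∑ᵢ ∂ᵢ∂ᵢ - ∂_τ` of a family `e` of space directions and a time direction
`τ`. -/
noncomputable def frameHeat (e : ι → P) (τ : P) (g : P → ℝ) (p : P) : ℝ :=
  frameLaplacian e g p - dirDeriv τ g p

/-- The inner product `∑ᵢ ∂ᵢ g · ∂ᵢ h` of the gradients of `g` and `h` along the family `e`. -/
noncomputable def gradInner (e : ι → P) (g h : P → ℝ) (p : P) : ℝ :=
  ∑ i, dirDeriv (e i) g p * dirDeriv (e i) h p

/-- The Li–Yau quantity `|∇f|² - β ∂_τ f`, to be evaluated at the logarithm `f` of a positive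
solution of the heat equation. -/
noncomputable def liYau (e : ι → P) (τ : P) (β : ℝ) (f : P → ℝ) (p : P) : ℝ :=
  gradInner e f f p - β * dirDeriv τ f p

lemma gradInner_self_nonneg (e : ι → P) (g : P → ℝ) (p : P) : 0 ≤ gradInner e g g p :=
  Finset.sum_nonneg fun _ _ => mul_self_nonneg _

lemma sq_gradInner_le (e : ι → P) (g h : P → ℝ) (p : P) :
    gradInner e g h p ^ 2 ≤ gradInner e g g p * gradInner e h h p := by
  simpa only [gradInner, sq] using Finset.sum_mul_sq_le_sq_mul_sq Finset.univ
    (fun i => dirDeriv (e i) g p) (fun i => dirDeriv (e i) h p)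

lemma sq_frameLaplacian_le (e : ι → P) (g : P → ℝ) (p : P) :
    frameLaplacian e g p ^ 2 ≤
      Fintype.card ι * ∑ j, gradInner e (dirDeriv (e j) g) (dirDeriv (e j) g) p := by
  calc frameLaplacian e g p ^ 2
      ≤ Fintype.card ι * ∑ j, dirDeriv (e j) (dirDeriv (e j) g) p ^ 2 :=
        sq_sum_le_card_mul_sum_sq
    _ ≤ Fintype.card ι * ∑ j, gradInner e (dirDeriv (e j) g) (dirDeriv (e j) g) p := by
        gcongr with j
        rw [sq]
        exact Finset.single_le_sum
          (f := fun i => dirDeriv (e i) (dirDeriv (e j) g) p * dirDeriv (e i) (dirDeriv (e j) g) p)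
          (fun _ _ => mul_self_nonneg _) (Finset.mem_univ j)

lemma frameHeat_sub (hg : ContDiffAt ℝ 2 g p) (hh : ContDiffAt ℝ 2 h p) :
    frameHeat e τ (fun q => g q - h q) p = frameHeat e τ g p - frameHeat e τ h p := by
  simp only [frameHeat, frameLaplacian, dirDeriv_dirDeriv_sub hg hh, Finset.sum_sub_distrib,
    dirDeriv_sub (hg.differentiableAt two_ne_zero) (hh.differentiableAt two_ne_zero)]
  ring

lemma frameHeat_const_mul (c : ℝ) (g : P → ℝ) (p : P) :
    frameHeat e τ (fun q => c * g q) p = c * frameHeat e τ g p := by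
  simp only [frameHeat, frameLaplacian, dirDeriv_const_mul, ← Finset.mul_sum, mul_sub]

lemma frameHeat_sum {κ : Type*} {s : Finset κ} {g : κ → P → ℝ}
    (hg : ∀ j ∈ s, ContDiffAt ℝ 2 (g j) p) :
    frameHeat e τ (fun q => ∑ j ∈ s, g j q) p = ∑ j ∈ s, frameHeat e τ (g j) p := by
  simp only [frameHeat, frameLaplacian, dirDeriv_dirDeriv_sum hg,
    dirDeriv_sum fun j hj => (hg j hj).differentiableAt two_ne_zero, Finset.sum_sub_distrib]
  rw [Finset.sum_comm]

lemma frameHeat_mul_self (hg : ContDiffAt ℝ 2 g p) :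
    frameHeat e τ (fun q => g q * g q) p =
      2 * gradInner e g g p + 2 * g p * frameHeat e τ g p := by
  simp only [frameHeat, frameLaplacian, gradInner, dirDeriv_dirDeriv_mul hg hg,
    dirDeriv_mul (hg.differentiableAt two_ne_zero) (hg.differentiableAt two_ne_zero),
    Finset.sum_add_distrib, ← Finset.mul_sum, ← Finset.sum_mul]
  ring

lemma frameHeat_dirDeriv (hg : ContDiffAt ℝ 3 g p) (v : P) :
    frameHeat e τ (dirDeriv v g) p = dirDeriv v (frameHeat e τ g) p := by
  have hg₂ : ContDiffAt ℝ 2 g p := hg.of_le (by norm_num)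
  have hDDg (w : P) : DifferentiableAt ℝ (dirDeriv w (dirDeriv w g)) p :=
    differentiableAt_dirDeriv (contDiffAt_dirDeriv hg (by norm_num) w) w
  unfold frameHeat frameLaplacian
  rw [dirDeriv_sub (.fun_sum fun i _ => hDDg (e i)) (differentiableAt_dirDeriv hg₂ τ),
    dirDeriv_sum fun i _ => hDDg (e i), dirDeriv_comm hg₂ τ v]
  simp only [dirDeriv_dirDeriv_dirDeriv_comm hg v]

lemma dirDeriv_gradInner_self (hf : ContDiffAt ℝ 2 f p) (v : P) :
    dirDeriv v (gradInner e f f) p =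
      2 * ∑ j, dirDeriv (e j) f p * dirDeriv v (dirDeriv (e j) f) p := by
  have hDf (j : ι) : DifferentiableAt ℝ (dirDeriv (e j) f) p := differentiableAt_dirDeriv hf (e j)
  unfold gradInner
  rw [dirDeriv_sum fun j _ => (hDf j).fun_mul (hDf j), Finset.mul_sum]
  refine Finset.sum_congr rfl fun j _ => ?_
  rw [dirDeriv_mul (hDf j) (hDf j)]
  ring

lemma contDiffAt_gradInner_self {m n : WithTop ℕ∞} (hf : ContDiffAt ℝ n f p) (hmn : m + 1 ≤ n) :
    ContDiffAt ℝ m (gradInner e f f) p :=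
  .sum fun i _ => (contDiffAt_dirDeriv hf hmn (e i)).mul (contDiffAt_dirDeriv hf hmn (e i))

lemma contDiffAt_liYau {m n : WithTop ℕ∞} (hf : ContDiffAt ℝ n f p) (hmn : m + 1 ≤ n) :
    ContDiffAt ℝ m (liYau e τ β f) p :=
  (contDiffAt_gradInner_self hf hmn).sub (contDiffAt_const.mul (contDiffAt_dirDeriv hf hmn τ))

lemma gradInner_liYau (hf : ContDiffAt ℝ 2 f p) :
    gradInner e f (liYau e τ β f) p =
      2 * ∑ j, dirDeriv (e j) f p * gradInner e f (dirDeriv (e j) f) p -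
        β * gradInner e f (dirDeriv τ f) p := by
  have hDF (v : P) : dirDeriv v (liYau e τ β f) p =
      2 * ∑ j, dirDeriv (e j) f p * dirDeriv v (dirDeriv (e j) f) p -
        β * dirDeriv v (dirDeriv τ f) p := by
    unfold liYau
    rw [dirDeriv_sub, dirDeriv_gradInner_self hf, dirDeriv_const_mul]
    · exact (contDiffAt_gradInner_self hf (m := 1) (by norm_num)).differentiableAt one_ne_zero
    · exact (differentiableAt_dirDeriv hf τ).const_mul β
  simp only [gradInner, hDF, mul_sub, Finset.sum_sub_distrib, Finset.mul_sum]
  rw [Finset.sum_comm]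
  congr 1
  · exact Finset.sum_congr rfl fun j _ => Finset.sum_congr rfl fun i _ => by ring
  · exact Finset.sum_congr rfl fun i _ => by ring

/-- The hypothesis is the equation satisfied by `f = log u` when `u` solves the heat equation. -/
lemma frameHeat_dirDeriv_of_frameHeat_eq_neg_gradInner (hf : ContDiffAt ℝ 3 f p)
    (hheat : frameHeat e τ f =ᶠ[𝓝 p] fun q => -gradInner e f f q) (v : P) :
    frameHeat e τ (dirDeriv v f) p = -2 * gradInner e f (dirDeriv v f) p := by
  have hf₂ : ContDiffAt ℝ 2 f p := hf.of_le (by norm_num)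
  rw [frameHeat_dirDeriv hf, dirDeriv_congr hheat, dirDeriv_neg]
  simp only [dirDeriv_gradInner_self hf₂, gradInner, Finset.mul_sum, ← Finset.sum_neg_distrib]
  refine Finset.sum_congr rfl fun i _ => ?_
  rw [dirDeriv_comm hf₂ v]
  ring

theorem frameHeat_liYau (hf : ContDiffAt ℝ 3 f p)
    (hheat : frameHeat e τ f =ᶠ[𝓝 p] fun q => -gradInner e f f q) :
    frameHeat e τ (liYau e τ β f) p =
      2 * ∑ j, gradInner e (dirDeriv (e j) f) (dirDeriv (e j) f) p -
        2 * gradInner e f (liYau e τ β f) p := by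
  have hDf (v : P) : ContDiffAt ℝ 2 (dirDeriv v f) p := contDiffAt_dirDeriv hf (by norm_num) v
  have linearised := frameHeat_dirDeriv_of_frameHeat_eq_neg_gradInner hf hheat
  have heat_gradInner : frameHeat e τ (gradInner e f f) p =
      2 * ∑ j, gradInner e (dirDeriv (e j) f) (dirDeriv (e j) f) p -
        4 * ∑ j, dirDeriv (e j) f p * gradInner e f (dirDeriv (e j) f) p := by
    rw [Finset.mul_sum, Finset.mul_sum, ← Finset.sum_sub_distrib]
    change frameHeat e τ (fun q => ∑ j, dirDeriv (e j) f q * dirDeriv (e j) f q) p = _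
    rw [frameHeat_sum fun j _ => (hDf (e j)).mul (hDf (e j))]
    refine Finset.sum_congr rfl fun j _ => ?_
    rw [frameHeat_mul_self (hDf (e j)), linearised]
    ring
  have heat_liYau : frameHeat e τ (liYau e τ β f) p =
      frameHeat e τ (gradInner e f f) p - β * frameHeat e τ (dirDeriv τ f) p := by
    unfold liYau
    rw [frameHeat_sub (contDiffAt_gradInner_self hf (by norm_num))
      (contDiffAt_const.mul (hDf τ)), frameHeat_const_mul]
  rw [heat_liYau, heat_gradInner, linearised, gradInner_liYau (hf.of_le (by norm_num))]
  ring

end Bochner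

section MaximumPoint

variable {P ι : Type*} [NormedAddCommGroup P] [NormedSpace ℝ P] [Fintype ι]
  {e : ι → P} {τ p v : P} {f g w F : P → ℝ} {β : ℝ}

lemma deriv_deriv_nonpos_of_isLocalMax {k : ℝ → ℝ} {a : ℝ} (hk : ContinuousAt k a)
    (hmax : IsLocalMax k a) : deriv (deriv k) a ≤ 0 := by
  by_contra! hpos
  have hmin : IsLocalMin k a := isLocalMin_of_deriv_deriv_pos hpos hmax.deriv_eq_zero hk
  have hconst : k =ᶠ[𝓝 a] fun _ => k a := by
    filter_upwards [hmax, hmin] with x hle hge using le_antisymm hle hge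
  simp [hconst.deriv.deriv_eq] at hpos

lemma hasDerivAt_comp_line {s : ℝ} (hg : DifferentiableAt ℝ g (p + s • v)) :
    HasDerivAt (fun s : ℝ => g (p + s • v)) (dirDeriv v g (p + s • v)) s := by
  have hline : HasDerivAt (fun s : ℝ => p + s • v) v s := by
    simpa using ((hasDerivAt_id s).smul_const v).const_add p
  exact hg.hasFDerivAt.comp_hasDerivAt s hline

lemma hasDerivAt_comp_line_zero (hg : DifferentiableAt ℝ g p) :
    HasDerivAt (fun s : ℝ => g (p + s • v)) (dirDeriv v g p) 0 := by
  simpa using hasDerivAt_comp_line (p := p) (v := v) (s := 0) (by simpa using hg)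

lemma dirDeriv_eq_zero_of_isLocalMax_line (hg : DifferentiableAt ℝ g p)
    (hmax : IsLocalMax (fun s : ℝ => g (p + s • v)) 0) : dirDeriv v g p = 0 :=
  hmax.hasDerivAt_eq_zero (hasDerivAt_comp_line_zero hg)

lemma dirDeriv_dirDeriv_nonpos_of_isLocalMax_line (hg : ContDiffAt ℝ 2 g p)
    (hmax : IsLocalMax (fun s : ℝ => g (p + s • v)) 0) : dirDeriv v (dirDeriv v g) p ≤ 0 := by
  have hline : Tendsto (fun s : ℝ => p + s • v) (𝓝 0) (𝓝 p) :=
    (by fun_prop : Continuous fun s : ℝ => p + s • v).tendsto' 0 p (by simp)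
  have first_order : deriv (fun s : ℝ => g (p + s • v)) =ᶠ[𝓝 0]
      fun s => dirDeriv v g (p + s • v) :=
    (hline.eventually (eventually_differentiableAt hg)).mono fun s hs =>
      (hasDerivAt_comp_line hs).deriv
  have hcont : ContinuousAt (fun s : ℝ => g (p + s • v)) 0 :=
    (hasDerivAt_comp_line_zero (hg.differentiableAt two_ne_zero)).continuousAt
  rw [← (hasDerivAt_comp_line_zero (differentiableAt_dirDeriv hg v)).deriv,
    ← first_order.deriv_eq]
  exact deriv_deriv_nonpos_of_isLocalMax hcont hmax

lemma mul_dirDeriv_of_isLocalMax_sq_mul (hw : DifferentiableAt ℝ w p) (hF : DifferentiableAt ℝ F p)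
    (hwp : w p ≠ 0) (hmax : IsLocalMax (fun s : ℝ => w (p + s • v) ^ 2 * F (p + s • v)) 0) :
    w p * dirDeriv v F p = -2 * F p * dirDeriv v w p := by
  simp only [sq] at hmax
  have hzero := dirDeriv_eq_zero_of_isLocalMax_line ((hw.fun_mul hw).fun_mul hF) hmax
  rw [dirDeriv_mul (hw.fun_mul hw) hF, dirDeriv_mul hw hw] at hzero
  exact mul_left_cancel₀ hwp (by linear_combination hzero)

lemma sq_mul_dirDeriv_dirDeriv_le_of_isLocalMax_sq_mul (hw : ContDiffAt ℝ 2 w p)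
    (hF : ContDiffAt ℝ 2 F p) (hwp : w p ≠ 0)
    (hmax : IsLocalMax (fun s : ℝ => w (p + s • v) ^ 2 * F (p + s • v)) 0) :
    w p ^ 2 * dirDeriv v (dirDeriv v F) p ≤
      F p * (6 * (dirDeriv v w p * dirDeriv v w p) - 2 * w p * dirDeriv v (dirDeriv v w) p) := by
  have hw₁ := hw.differentiableAt two_ne_zero
  have critical :=
    mul_dirDeriv_of_isLocalMax_sq_mul hw₁ (hF.differentiableAt two_ne_zero) hwp hmax
  simp only [sq] at hmax
  have concave := dirDeriv_dirDeriv_nonpos_of_isLocalMax_line ((hw.mul hw).mul hF) hmax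
  rw [dirDeriv_dirDeriv_mul (hw.mul hw) hF, dirDeriv_dirDeriv_mul hw hw,
    dirDeriv_mul hw₁ hw₁] at concave
  linear_combination concave - 4 * dirDeriv v w p * critical

lemma mul_gradInner_of_isLocalMax_sq_mul (hw : DifferentiableAt ℝ w p)
    (hF : DifferentiableAt ℝ F p) (hwp : w p ≠ 0)
    (hmax : ∀ i, IsLocalMax (fun s : ℝ => w (p + s • e i) ^ 2 * F (p + s • e i)) 0)
    (g : P → ℝ) :
    w p * gradInner e g F p = -2 * F p * gradInner e g w p := by
  simp only [gradInner, Finset.mul_sum]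
  refine Finset.sum_congr rfl fun i _ => ?_
  linear_combination
    dirDeriv (e i) g p * mul_dirDeriv_of_isLocalMax_sq_mul hw hF hwp (hmax i)

lemma sq_mul_frameLaplacian_le_of_isLocalMax_sq_mul (hw : ContDiffAt ℝ 2 w p)
    (hF : ContDiffAt ℝ 2 F p) (hwp : w p ≠ 0)
    (hmax : ∀ i, IsLocalMax (fun s : ℝ => w (p + s • e i) ^ 2 * F (p + s • e i)) 0) :
    w p ^ 2 * frameLaplacian e F p ≤
      F p * (6 * gradInner e w w p - 2 * w p * frameLaplacian e w p) := by
  simp only [frameLaplacian, gradInner, Finset.mul_sum, ← Finset.sum_sub_distrib]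
  refine Finset.sum_le_sum fun i _ => ?_
  simpa only [mul_sub, ← mul_assoc] using
    sq_mul_dirDeriv_dirDeriv_le_of_isLocalMax_sq_mul hw hF hwp (hmax i)

lemma neg_four_mul_le_of_sq_le_mul {A J N b w κ : ℝ} (hA : 0 ≤ A) (hκ : 0 ≤ κ) (hb : 0 < b)
    (hJ : J ^ 2 ≤ A * κ) : -(4 * N * w * J) ≤ 4 * b * A * w ^ 2 + N ^ 2 * κ / b := by
  refine (neg_le_abs _).trans (abs_le_of_sq_le_sq ?_ (by positivity))
  calc (4 * N * w * J) ^ 2 = 16 * N ^ 2 * w ^ 2 * J ^ 2 := by ring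
    _ ≤ 16 * N ^ 2 * w ^ 2 * (A * κ) := by gcongr
    _ = 4 * (4 * b * A * w ^ 2) * (N ^ 2 * κ / b) := by field_simp; ring
    _ ≤ (4 * b * A * w ^ 2 + N ^ 2 * κ / b) ^ 2 := four_mul_le_sq_add _ _

/-- The algebra at a maximum point of `s w² F`, for the Li–Yau quantity `F` of `f`: the letters
stand for `A = |∇f|²`, `Ft = ∂ₜF`, `I = ⟨∇f, ∇F⟩`, `J = ⟨∇f, ∇w⟩`, `L = ΔF`, `S = |∇²f|²` and
`b = β - 1`. Dropping `b² A²` from the square leaves the term `4 b A w²` that absorbs `J`. -/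
lemma mul_sq_mul_le_of_quadratic {A F Ft I J L N S b c s w κ : ℝ}
    (hA : 0 ≤ A) (hF : 0 < F) (hN : 0 ≤ N) (hb : 0 < b) (hs : 0 < s) (hκ : 0 ≤ κ)
    (hw : w ^ 2 ≤ 1) (trace : (F + b * A) ^ 2 ≤ N * S) (bochner : L - Ft = 2 * S - 2 * I)
    (space : w ^ 2 * L ≤ F * c) (time : 0 ≤ F + s * Ft) (critical : w * I = -2 * F * J)
    (hJ : J ^ 2 ≤ A * κ) :
    s * (w ^ 2 * F) ≤ N / 2 * (1 + s * (c + N * κ / b)) := by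
  have hFt : -Ft ≤ F / s := by rw [le_div_iff₀ hs]; linarith
  have quadratic : F * (2 * w ^ 2 * F + 4 * b * A * w ^ 2) ≤
      F * (N * (c + w ^ 2 / s - 4 * w * J)) := by
    calc F * (2 * w ^ 2 * F + 4 * b * A * w ^ 2)
        ≤ 2 * w ^ 2 * (F + b * A) ^ 2 := by nlinarith [sq_nonneg (w * (b * A))]
      _ ≤ 2 * w ^ 2 * (N * S) := by gcongr
      _ = N * (w ^ 2 * L + w ^ 2 * -Ft + 2 * w * (w * I)) := by
          linear_combination (-N * w ^ 2) * bochner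
      _ ≤ N * (F * c + w ^ 2 * (F / s) + 2 * w * (-2 * F * J)) := by rw [critical]; gcongr
      _ = F * (N * (c + w ^ 2 / s - 4 * w * J)) := by ring
  have linear := le_of_mul_le_mul_left quadratic hF
  have young := neg_four_mul_le_of_sq_le_mul (N := N) (w := w) hA hκ hb hJ
  calc s * (w ^ 2 * F) = s / 2 * (2 * w ^ 2 * F) := by ring
    _ ≤ s / 2 * (N * (c + w ^ 2 / s) + N ^ 2 * κ / b) := by gcongr; linarith
    _ = N / 2 * (w ^ 2 + s * (c + N * κ / b)) := by field_simp; ring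
    _ ≤ N / 2 * (1 + s * (c + N * κ / b)) := by gcongr

theorem mul_sq_mul_liYau_le_of_isLocalMax {s c κ : ℝ} (hf : ContDiffAt ℝ 3 f p)
    (hheat : frameHeat e τ f =ᶠ[𝓝 p] fun q => -gradInner e f f q) (hβ : 1 < β)
    (hw : ContDiffAt ℝ 2 w p) (hw_pos : 0 < w p) (hw_le : w p ≤ 1) (hs : 0 < s)
    (hF : 0 < liYau e τ β f p)
    (space : ∀ i, IsLocalMax
      (fun r : ℝ => w (p + r • e i) ^ 2 * liYau e τ β f (p + r • e i)) 0)
    (time : 0 ≤ liYau e τ β f p + s * dirDeriv τ (liYau e τ β f) p)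
    (hκ : gradInner e w w p ≤ κ)
    (hc : 6 * gradInner e w w p - 2 * w p * frameLaplacian e w p ≤ c) :
    s * (w p ^ 2 * liYau e τ β f p) ≤
      Fintype.card ι * β ^ 2 / 2 * (1 + s * (c + Fintype.card ι * β ^ 2 * κ / (β - 1))) := by
  have hF₂ : ContDiffAt ℝ 2 (liYau e τ β f) p := contDiffAt_liYau hf (by norm_num)
  have log_heat : frameLaplacian e f p - dirDeriv τ f p = -gradInner e f f p := hheat.eq_of_nhds
  have trace : (liYau e τ β f p + (β - 1) * gradInner e f f p) ^ 2 ≤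
      Fintype.card ι * β ^ 2 * ∑ j, gradInner e (dirDeriv (e j) f) (dirDeriv (e j) f) p := by
    have : liYau e τ β f p + (β - 1) * gradInner e f f p = -(β * frameLaplacian e f p) := by
      unfold liYau
      linear_combination β * log_heat
    rw [this, neg_sq, mul_pow, mul_comm (Fintype.card ι : ℝ), mul_assoc]
    gcongr
    exact sq_frameLaplacian_le e f p
  refine mul_sq_mul_le_of_quadratic (gradInner_self_nonneg e f p) hF (by positivity)
    (sub_pos.2 hβ) hs ((gradInner_self_nonneg e w p).trans hκ) (pow_le_one₀ hw_pos.le hw_le)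
    trace (frameHeat_liYau hf hheat)
    ((sq_mul_frameLaplacian_le_of_isLocalMax_sq_mul hw hF₂ hw_pos.ne' space).trans ?_) time
    (mul_gradInner_of_isLocalMax_sq_mul (hw.differentiableAt two_ne_zero)
      (hF₂.differentiableAt two_ne_zero) hw_pos.ne' space f)
    ((sq_gradInner_le e f w p).trans ?_)
  · gcongr
  · have := gradInner_self_nonneg e f p
    gcongr

end MaximumPoint

section CylinderMaximum

variable {E : Type*} [NormedAddCommGroup E] [NormedSpace ℝ E] {S : Set E} {δ t : ℝ} {p : E × ℝ}
  {φ : E × ℝ → ℝ}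

/-- The unit time direction of space-time `E × ℝ`. -/
def timeDir : E × ℝ :=
  (0, 1)

lemma deriv_nonneg_of_isMaxOn_Icc {k : ℝ → ℝ} {k' a b t : ℝ} (hk : HasDerivAt k k' t)
    (hmax : IsMaxOn k (Icc a b) t) (ht : t ∈ Ioc a b) : 0 ≤ k' := by
  have hleft : a - t ∈ posTangentConeAt (Icc a b) t :=
    sub_mem_posTangentConeAt_of_segment_subset <|
      (convex_Icc a b).segment_subset ⟨ht.1.le, ht.2⟩ ⟨le_rfl, ht.1.le.trans ht.2⟩
  have hle := hmax.localize.hasFDerivWithinAt_nonpos hk.hasFDerivAt.hasFDerivWithinAt hleft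
  have : (a - t) * k' ≤ 0 := by simpa using hle
  exact nonneg_of_mul_nonpos_right this (sub_neg.2 ht.1)

lemma isLocalMax_line_of_isMaxOn_cylinder
    (hmax : IsMaxOn (fun q : E × ℝ => (q.2 - δ) * φ q) (S ×ˢ Icc δ t) p) (hS : S ∈ 𝓝 p.1)
    (hp : p.2 ∈ Ioc δ t) (v : E) :
    IsLocalMax (fun s : ℝ => φ (p + s • ((v, 0) : E × ℝ))) 0 := by
  have hline : Tendsto (fun s : ℝ => p.1 + s • v) (𝓝 0) (𝓝 p.1) :=
    (by fun_prop : Continuous fun s : ℝ => p.1 + s • v).tendsto' 0 p.1 (by simp)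
  filter_upwards [hline.eventually hS] with s hs
  have hle : (p.2 - δ) * φ (p + s • (v, 0)) ≤ (p.2 - δ) * φ p := by
    simpa using hmax (show p + s • ((v, 0) : E × ℝ) ∈ S ×ˢ Icc δ t from
      ⟨hs, by simpa using Ioc_subset_Icc_self hp⟩)
  simpa using le_of_mul_le_mul_left hle (sub_pos.2 hp.1)

lemma add_mul_dirDeriv_timeDir_nonneg_of_isMaxOn_cylinder
    (hmax : IsMaxOn (fun q : E × ℝ => (q.2 - δ) * φ q) (S ×ˢ Icc δ t) p) (hS : p.1 ∈ S)
    (hp : p.2 ∈ Ioc δ t) (hφ : DifferentiableAt ℝ φ p) :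
    0 ≤ φ p + (p.2 - δ) * dirDeriv timeDir φ p := by
  have hline : HasDerivAt (fun s => φ (p.1, s)) (dirDeriv timeDir φ p) p.2 :=
    hφ.hasFDerivAt.comp_hasDerivAt p.2 ((hasDerivAt_const _ _).prodMk (hasDerivAt_id _))
  have hderiv := ((hasDerivAt_id p.2).sub_const δ).mul hline
  simpa using deriv_nonneg_of_isMaxOn_Icc hderiv (fun s hs => hmax (mk_mem_prod hS hs)) hp

end CylinderMaximum

section BallCutoff

variable {E ι : Type*} [NormedAddCommGroup E]

/-- The cutoff `1 - r²‖x‖²` on space-time, positive exactly on the cylinder over the open ball of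
radius `r⁻¹`. Working with the inverse radius lets the localisation be removed by `r → 0`. -/
noncomputable def ballCutoff (r : ℝ) (q : E × ℝ) : ℝ :=
  1 - r ^ 2 * ‖q.1‖ ^ 2

lemma ballCutoff_le_one (r : ℝ) (q : E × ℝ) : ballCutoff r q ≤ 1 :=
  sub_le_self 1 (by positivity)

lemma ballCutoff_nonneg_iff {r : ℝ} (hr : 0 < r) {q : E × ℝ} :
    0 ≤ ballCutoff r q ↔ q.1 ∈ Metric.closedBall 0 r⁻¹ := by
  rw [ballCutoff, sub_nonneg, ← mul_pow, sq_le_one_iff₀ (by positivity), mem_closedBall_zero_iff,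
    ← mul_one r⁻¹, le_inv_mul_iff₀ hr]

variable [InnerProductSpace ℝ E]

lemma contDiff_ballCutoff {n : WithTop ℕ∞} (r : ℝ) : ContDiff ℝ n (ballCutoff (E := E) r) :=
  contDiff_const.sub (contDiff_const.mul (contDiff_fst.norm_sq ℝ))

lemma dirDeriv_ballCutoff (r : ℝ) (v : E × ℝ) :
    dirDeriv v (ballCutoff r) = fun q => -(2 * r ^ 2) * ⟪q.1, v.1⟫ := by
  ext q
  have hderiv : HasFDerivAt (ballCutoff r) _ q :=
    ((hasFDerivAt_fst (𝕜 := ℝ) (p := q)).norm_sq.const_mul (r ^ 2)).const_sub 1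
  rw [dirDeriv, hderiv.fderiv]
  simp only [neg_apply, smul_apply, ContinuousLinearMap.comp_apply,
    ContinuousLinearMap.coe_fst', coe_innerSL_apply, nsmul_eq_mul, Nat.cast_ofNat, smul_eq_mul]
  ring

lemma dirDeriv_dirDeriv_ballCutoff (r : ℝ) (v q : E × ℝ) :
    dirDeriv v (dirDeriv v (ballCutoff r)) q = -(2 * r ^ 2) * ‖v.1‖ ^ 2 := by
  have hderiv : HasFDerivAt (fun q : E × ℝ => ⟪q.1, v.1⟫) _ q :=
    (hasFDerivAt_fst (𝕜 := ℝ) (p := q)).inner ℝ (hasFDerivAt_const v.1 q)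
  rw [dirDeriv_ballCutoff, dirDeriv_const_mul]
  simp [dirDeriv, hderiv.fderiv]

lemma dirDeriv_timeDir_ballCutoff (r : ℝ) (q : E × ℝ) :
    dirDeriv timeDir (ballCutoff r) q = 0 := by
  simp [dirDeriv_ballCutoff, timeDir]

variable [Fintype ι]

/-- An orthonormal basis of space, viewed as a family of directions in space-time `E × ℝ`. -/
noncomputable def spatialFrame (b : OrthonormalBasis ι ℝ E) (i : ι) : E × ℝ :=
  (b i, 0)

lemma gradInner_ballCutoff (b : OrthonormalBasis ι ℝ E) (r : ℝ) (q : E × ℝ) :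
    gradInner (spatialFrame b) (ballCutoff r) (ballCutoff r) q = 4 * r ^ 4 * ‖q.1‖ ^ 2 := by
  rw [← b.sum_sq_inner_left q.1, Finset.mul_sum]
  refine Finset.sum_congr rfl fun i _ => ?_
  simp only [dirDeriv_ballCutoff, spatialFrame]
  ring

lemma frameLaplacian_ballCutoff (b : OrthonormalBasis ι ℝ E) (r : ℝ) (q : E × ℝ) :
    frameLaplacian (spatialFrame b) (ballCutoff r) q = -(2 * Fintype.card ι * r ^ 2) := by
  simp only [frameLaplacian, spatialFrame, dirDeriv_dirDeriv_ballCutoff,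
    OrthonormalBasis.norm_eq_one, Finset.sum_const, Finset.card_univ, nsmul_eq_mul]
  ring

lemma gradInner_ballCutoff_le (b : OrthonormalBasis ι ℝ E) {r : ℝ} {q : E × ℝ}
    (hq : 0 ≤ ballCutoff r q) :
    gradInner (spatialFrame b) (ballCutoff r) (ballCutoff r) q ≤ 4 * r ^ 2 := by
  rw [ballCutoff] at hq
  rw [gradInner_ballCutoff]
  nlinarith [sq_nonneg r]

lemma six_mul_gradInner_sub_ballCutoff_le (b : OrthonormalBasis ι ℝ E) {r : ℝ} {q : E × ℝ}
    (hq : 0 ≤ ballCutoff r q) :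
    6 * gradInner (spatialFrame b) (ballCutoff r) (ballCutoff r) q -
        2 * ballCutoff r q * frameLaplacian (spatialFrame b) (ballCutoff r) q ≤
      (24 + 4 * Fintype.card ι) * r ^ 2 := by
  have hlap : ballCutoff r q * (4 * Fintype.card ι * r ^ 2) ≤ 4 * Fintype.card ι * r ^ 2 :=
    mul_le_of_le_one_left (by positivity) (ballCutoff_le_one r q)
  rw [frameLaplacian_ballCutoff]
  linarith [gradInner_ballCutoff_le b hq]

end BallCutoff

lemma eventually_of_mem_strip {X : Type*} [TopologicalSpace X] {Q : X × ℝ → Prop} {q : X × ℝ}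
    {T : ℝ} (hQ : ∀ q : X × ℝ, q.2 ∈ Ioo 0 T → Q q) (hq : q.2 ∈ Ioo 0 T) : ∀ᶠ q' in 𝓝 q, Q q' :=
  (continuous_snd.continuousAt.eventually_mem (isOpen_Ioo.mem_nhds hq)).mono hQ

lemma contDiffAt_of_mem_strip {E : Type*} [NormedAddCommGroup E] [NormedSpace ℝ E]
    {f : E × ℝ → ℝ} {q : E × ℝ} {T : ℝ} {n : WithTop ℕ∞} (hf : ContDiffOn ℝ n f (univ ×ˢ Ioo 0 T))
    (hq : q.2 ∈ Ioo 0 T) : ContDiffAt ℝ n f q :=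
  hf.contDiffAt ((isOpen_univ.prod isOpen_Ioo).mem_nhds ⟨mem_univ _, hq⟩)

section LiYauEstimate

variable {E ι : Type*} [NormedAddCommGroup E] [InnerProductSpace ℝ E] [Fintype ι]
  {b : OrthonormalBasis ι ℝ E} {T : ℝ} {f : E × ℝ → ℝ} {β r δ : ℝ} {p q : E × ℝ}

lemma mul_sq_ballCutoff_mul_liYau_le_of_isMaxOn
    (hf : ContDiffAt ℝ 3 f p)
    (hheat : frameHeat (spatialFrame b) timeDir f =ᶠ[𝓝 p]
      fun q => -gradInner (spatialFrame b) f f q) (hβ : 1 < β) (hr : 0 < r) {t : ℝ}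
    (hp : p ∈ Metric.closedBall 0 r⁻¹ ×ˢ Icc δ t)
    (hmax : IsMaxOn
      (fun q => (q.2 - δ) * (ballCutoff r q ^ 2 * liYau (spatialFrame b) timeDir β f q))
      (Metric.closedBall 0 r⁻¹ ×ˢ Icc δ t) p)
    (hpos : 0 < (p.2 - δ) * (ballCutoff r p ^ 2 * liYau (spatialFrame b) timeDir β f p)) :
    (p.2 - δ) * (ballCutoff r p ^ 2 * liYau (spatialFrame b) timeDir β f p) ≤
      Fintype.card ι * β ^ 2 / 2 * (1 + (p.2 - δ) *
        ((24 + 4 * Fintype.card ι) * r ^ 2 + Fintype.card ι * β ^ 2 * (4 * r ^ 2) / (β - 1))) := by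
  have hw_nonneg : 0 ≤ ballCutoff r p := (ballCutoff_nonneg_iff hr).2 hp.1
  have hw_pos : 0 < ballCutoff r p := hw_nonneg.lt_of_ne' fun h => by simp [h] at hpos
  have hδ : δ < p.2 := hp.2.1.lt_of_ne' fun h => by simp [h] at hpos
  have hF_pos : 0 < liYau (spatialFrame b) timeDir β f p :=
    pos_of_mul_pos_right (pos_of_mul_pos_right hpos (sub_nonneg.2 hδ.le)) (sq_nonneg _)
  have hw : ContDiffAt ℝ 2 (ballCutoff r) p := (contDiff_ballCutoff r).contDiffAt
  have hF : DifferentiableAt ℝ (liYau (spatialFrame b) timeDir β f) p :=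
    (contDiffAt_liYau hf (m := 2) (by norm_num)).differentiableAt two_ne_zero
  have hw₁ := hw.differentiableAt two_ne_zero
  have hball : Metric.closedBall 0 r⁻¹ ∈ 𝓝 p.1 := by
    have hcont : ContinuousAt (fun x : E => ballCutoff r (x, p.2)) p.1 :=
      ((contDiff_ballCutoff r (n := 0)).continuous.comp (by fun_prop)).continuousAt
    filter_upwards [hcont.eventually_const_lt hw_pos] with x hx
    exact (ballCutoff_nonneg_iff hr).1 hx.le
  have time : 0 ≤ liYau (spatialFrame b) timeDir β f p +
      (p.2 - δ) * dirDeriv timeDir (liYau (spatialFrame b) timeDir β f) p := by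
    have hweighted := add_mul_dirDeriv_timeDir_nonneg_of_isMaxOn_cylinder hmax hp.1 ⟨hδ, hp.2.2⟩
      ((hw₁.pow 2).fun_mul hF)
    simp only [sq] at hweighted
    rw [dirDeriv_mul (hw₁.fun_mul hw₁) hF, dirDeriv_mul hw₁ hw₁,
      dirDeriv_timeDir_ballCutoff] at hweighted
    exact (mul_nonneg_iff_of_pos_left (pow_pos hw_pos 2)).1 (by linarith)
  exact mul_sq_mul_liYau_le_of_isLocalMax hf hheat hβ hw hw_pos (ballCutoff_le_one r p)
    (sub_pos.2 hδ) hF_pos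
    (fun i => isLocalMax_line_of_isMaxOn_cylinder hmax hball ⟨hδ, hp.2.2⟩ (b i)) time
    (gradInner_ballCutoff_le b hw_nonneg) (six_mul_gradInner_sub_ballCutoff_le b hw_nonneg)

theorem mul_sq_ballCutoff_mul_liYau_le
    (hf : ContDiffOn ℝ 3 f (univ ×ˢ Ioo 0 T))
    (hheat : ∀ q : E × ℝ, q.2 ∈ Ioo 0 T →
      frameHeat (spatialFrame b) timeDir f q = -gradInner (spatialFrame b) f f q)
    (hβ : 1 < β) (hr : 0 < r) (hδ : 0 < δ) (hq : q.1 ∈ Metric.closedBall 0 r⁻¹)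
    (hδq : δ ≤ q.2) (hqT : q.2 < T) :
    (q.2 - δ) * (ballCutoff r q ^ 2 * liYau (spatialFrame b) timeDir β f q) ≤
      Fintype.card ι * β ^ 2 / 2 * (1 + q.2 *
        ((24 + 4 * Fintype.card ι) * r ^ 2 + Fintype.card ι * β ^ 2 * (4 * r ^ 2) / (β - 1))) := by
  set K : Set (E × ℝ) := Metric.closedBall 0 r⁻¹ ×ˢ Icc δ q.2
  have hK : ∀ p ∈ K, p.2 ∈ Ioo 0 T := fun p hp => ⟨hδ.trans_le hp.2.1, hp.2.2.trans_lt hqT⟩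
  have hcont : ContinuousOn (fun p : E × ℝ =>
      (p.2 - δ) * (ballCutoff r p ^ 2 * liYau (spatialFrame b) timeDir β f p)) K := by
    refine ((continuous_snd.sub continuous_const).continuousOn).mul
      (((contDiff_ballCutoff r (n := 0)).continuous.pow 2).continuousOn.mul fun p hp => ?_)
    exact (contDiffAt_liYau (contDiffAt_of_mem_strip hf (hK p hp)) (m := 2)
      (by norm_num)).continuousAt.continuousWithinAt
  have hqK : q ∈ K := ⟨hq, hδq, le_rfl⟩
  have : FiniteDimensional ℝ E := b.toBasis.finiteDimensional_of_finite
  obtain ⟨p, hpK, hmax⟩ :=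
    ((isCompact_closedBall 0 r⁻¹).prod isCompact_Icc).exists_isMaxOn ⟨q, hqK⟩ hcont
  have : 0 < β - 1 := sub_pos.2 hβ
  have hq₀ : 0 ≤ q.2 := hδ.le.trans hδq
  refine (hmax hqK).trans ?_
  rcases le_or_gt ((p.2 - δ) * (ballCutoff r p ^ 2 * liYau (spatialFrame b) timeDir β f p)) 0
    with hnonpos | hpos
  · exact hnonpos.trans (by positivity)
  · refine (mul_sq_ballCutoff_mul_liYau_le_of_isMaxOn (contDiffAt_of_mem_strip hf (hK p hpK))
      (eventually_of_mem_strip hheat (hK p hpK)) hβ hr hpK hmax hpos).trans ?_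
    gcongr
    linarith [hpK.2.2]

theorem mul_liYau_le (hf : ContDiffOn ℝ 3 f (univ ×ˢ Ioo 0 T))
    (hheat : ∀ q : E × ℝ, q.2 ∈ Ioo 0 T →
      frameHeat (spatialFrame b) timeDir f q = -gradInner (spatialFrame b) f f q)
    (hβ : 1 < β) (hq : q.2 ∈ Ioo 0 T) :
    q.2 * liYau (spatialFrame b) timeDir β f q ≤ Fintype.card ι * β ^ 2 / 2 := by
  have hleft : Tendsto
      (fun r => (q.2 - r) * (ballCutoff r q ^ 2 * liYau (spatialFrame b) timeDir β f q))
      (𝓝[>] 0) (𝓝 (q.2 * liYau (spatialFrame b) timeDir β f q)) := by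
    unfold ballCutoff
    exact tendsto_nhdsWithin_of_tendsto_nhds (Continuous.tendsto' (by fun_prop) _ _ (by simp))
  have hright : Tendsto (fun r : ℝ => Fintype.card ι * β ^ 2 / 2 * (1 + q.2 *
      ((24 + 4 * Fintype.card ι) * r ^ 2 + Fintype.card ι * β ^ 2 * (4 * r ^ 2) / (β - 1))))
      (𝓝[>] 0) (𝓝 (Fintype.card ι * β ^ 2 / 2)) :=
    tendsto_nhdsWithin_of_tendsto_nhds (Continuous.tendsto' (by fun_prop) _ _ (by simp))
  have hball : ∀ᶠ r : ℝ in 𝓝[>] 0, ‖q.1‖ ≤ r⁻¹ :=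
    tendsto_inv_nhdsGT_zero.eventually_ge_atTop ‖q.1‖
  refine le_of_tendsto_of_tendsto hleft hright ?_
  filter_upwards [Ioo_mem_nhdsGT hq.1, hball] with r hr hqr
  exact mul_sq_ballCutoff_mul_liYau_le hf hheat hβ hr.1 hr.1 (by simpa using hqr) hr.2.le hq.2

theorem mul_liYau_one_le (hf : ContDiffOn ℝ 3 f (univ ×ˢ Ioo 0 T))
    (hheat : ∀ q : E × ℝ, q.2 ∈ Ioo 0 T →
      frameHeat (spatialFrame b) timeDir f q = -gradInner (spatialFrame b) f f q)
    (hq : q.2 ∈ Ioo 0 T) :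
    q.2 * liYau (spatialFrame b) timeDir 1 f q ≤ Fintype.card ι / 2 := by
  have hleft : Tendsto (fun β => q.2 * liYau (spatialFrame b) timeDir β f q) (𝓝[>] 1)
      (𝓝 (q.2 * liYau (spatialFrame b) timeDir 1 f q)) := by
    unfold liYau
    exact tendsto_nhdsWithin_of_tendsto_nhds (Continuous.tendsto (by fun_prop) 1)
  have hright : Tendsto (fun β : ℝ => Fintype.card ι * β ^ 2 / 2) (𝓝[>] 1)
      (𝓝 ((Fintype.card ι : ℝ) / 2)) :=
    tendsto_nhdsWithin_of_tendsto_nhds (Continuous.tendsto' (by fun_prop) _ _ (by simp))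
  refine le_of_tendsto_of_tendsto hleft hright ?_
  filter_upwards [self_mem_nhdsWithin] with β hβ using mul_liYau_le hf hheat hβ hq

end LiYauEstimate

section LogHeat

variable {P ι : Type*} [NormedAddCommGroup P] [NormedSpace ℝ P] [Fintype ι]
  {e : ι → P} {τ p : P} {g : P → ℝ}

lemma dirDeriv_log (hg : DifferentiableAt ℝ g p) (hgp : g p ≠ 0) (v : P) :
    dirDeriv v (fun q => Real.log (g q)) p = dirDeriv v g p / g p := by
  simp only [dirDeriv, (hg.hasFDerivAt.log hgp).fderiv, smul_apply, smul_eq_mul, inv_mul_eq_div]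

lemma dirDeriv_dirDeriv_log (hg : ContDiffAt ℝ 2 g p) (hgp : g p ≠ 0) (v : P) :
    dirDeriv v (dirDeriv v fun q => Real.log (g q)) p =
      dirDeriv v (dirDeriv v g) p / g p -
        dirDeriv v (fun q => Real.log (g q)) p * dirDeriv v (fun q => Real.log (g q)) p := by
  have hg₁ := hg.differentiableAt two_ne_zero
  have first_order :
      (fun q => g q * dirDeriv v (fun q => Real.log (g q)) q) =ᶠ[𝓝 p] dirDeriv v g := by
    filter_upwards [eventually_differentiableAt hg, hg.continuousAt.eventually_ne hgp]
      with q hgq hq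
    rw [dirDeriv_log hgq hq, mul_div_cancel₀ _ hq]
  have second_order := dirDeriv_congr first_order v
  rw [dirDeriv_mul hg₁ (differentiableAt_dirDeriv (hg.log hgp) v)] at second_order
  rw [← second_order, dirDeriv_log hg₁ hgp]
  field_simp
  ring

lemma frameHeat_log (hg : ContDiffAt ℝ 2 g p) (hgp : g p ≠ 0) :
    frameHeat e τ (fun q => Real.log (g q)) p = frameHeat e τ g p / g p -
      gradInner e (fun q => Real.log (g q)) (fun q => Real.log (g q)) p := by
  simp only [frameHeat, frameLaplacian, gradInner, dirDeriv_dirDeriv_log hg hgp,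
    Finset.sum_sub_distrib, ← Finset.sum_div, dirDeriv_log (hg.differentiableAt two_ne_zero) hgp]
  ring

end LogHeat

section Slice

variable {E : Type*} [NormedAddCommGroup E] [NormedSpace ℝ E] {g : E × ℝ → ℝ} {x : E} {t : ℝ}

lemma deriv_slice (hg : DifferentiableAt ℝ g (x, t)) :
    deriv (fun s => g (x, s)) t = dirDeriv timeDir g (x, t) :=
  (hg.hasFDerivAt.comp_hasDerivAt t ((hasDerivAt_const t x).prodMk (hasDerivAt_id t))).deriv

lemma dirDeriv_slice (hg : DifferentiableAt ℝ g (x, t)) (v : E) :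
    dirDeriv v (fun y => g (y, t)) x = dirDeriv (v, 0) g (x, t) := by
  have hslice : HasFDerivAt (fun y => g (y, t)) _ x :=
    hg.hasFDerivAt.comp x (hasFDerivAt_prodMk_left x t)
  simp [dirDeriv, hslice.fderiv]

lemma dirDeriv_dirDeriv_slice (hg : ContDiffAt ℝ 2 g (x, t)) (v : E) :
    dirDeriv v (dirDeriv v fun y => g (y, t)) x =
      dirDeriv (v, 0) (dirDeriv (v, 0) g) (x, t) := by
  have hslice : Tendsto (fun y : E => (y, t)) (𝓝 x) (𝓝 (x, t)) :=
    Continuous.tendsto (by fun_prop) x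
  have first_order : dirDeriv v (fun y => g (y, t)) =ᶠ[𝓝 x]
      fun y => dirDeriv (v, 0) g (y, t) :=
    (hslice.eventually (eventually_differentiableAt hg)).mono fun y hy => dirDeriv_slice hy v
  rw [dirDeriv_congr first_order, dirDeriv_slice (differentiableAt_dirDeriv hg _)]

end Slice

section SpatialFrame

variable {E ι : Type*} [NormedAddCommGroup E] [InnerProductSpace ℝ E] [Fintype ι]
  {g : E × ℝ → ℝ} {x : E} {t : ℝ}

lemma laplacian_eq_frameLaplacian [FiniteDimensional ℝ E] (b : OrthonormalBasis ι ℝ E) {h : E → ℝ}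
    (hh : ContDiffAt ℝ 2 h x) : Δ h x = frameLaplacian b h x := by
  rw [InnerProductSpace.laplacian_eq_iteratedFDeriv_orthonormalBasis h b]
  refine Finset.sum_congr rfl fun i _ => ?_
  rw [iteratedFDeriv_two_apply, dirDeriv_dirDeriv_eq_fderiv_fderiv hh]
  rfl

lemma frameHeat_spatialFrame [FiniteDimensional ℝ E] (b : OrthonormalBasis ι ℝ E)
    (hg : ContDiffAt ℝ 2 g (x, t)) :
    frameHeat (spatialFrame b) timeDir g (x, t) =
      Δ (fun y => g (y, t)) x - deriv (fun s => g (x, s)) t := by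
  have hslice : ContDiffAt ℝ 2 (fun y => g (y, t)) x :=
    hg.comp x (contDiffAt_id.prodMk contDiffAt_const)
  rw [deriv_slice (hg.differentiableAt two_ne_zero), laplacian_eq_frameLaplacian b hslice]
  simp only [frameHeat, frameLaplacian, dirDeriv_dirDeriv_slice hg, spatialFrame]

lemma dirDeriv_prod_one (b : OrthonormalBasis ι ℝ E) (g : E × ℝ → ℝ) (q : E × ℝ) (v : E) :
    dirDeriv (v, 1) g q =
      dirDeriv timeDir g q + ∑ i, ⟪b i, v⟫ * dirDeriv (spatialFrame b i) g q := by
  have decomp : ((v, 1) : E × ℝ) = timeDir + ∑ i, ⟪b i, v⟫ • spatialFrame b i := by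
    ext
    · simp [timeDir, spatialFrame, Prod.fst_sum, b.sum_repr' v]
    · simp [timeDir, spatialFrame, Prod.snd_sum]
  simp only [dirDeriv, decomp, map_add, map_sum, map_smul, smul_eq_mul]

lemma neg_liYau_one_sub_le_dirDeriv (b : OrthonormalBasis ι ℝ E) (g : E × ℝ → ℝ) (q : E × ℝ)
    (v : E) :
    -liYau (spatialFrame b) timeDir 1 g q - ‖v‖ ^ 2 / 4 ≤ dirDeriv (v, 1) g q := by
  have complete_square : 0 ≤ gradInner (spatialFrame b) g g q +
      ∑ i, ⟪b i, v⟫ * dirDeriv (spatialFrame b i) g q + ‖v‖ ^ 2 / 4 := by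
    rw [← b.sum_sq_inner_right v, gradInner, Finset.sum_div, ← Finset.sum_add_distrib,
      ← Finset.sum_add_distrib]
    refine Finset.sum_nonneg fun i _ => ?_
    linarith [sq_nonneg (dirDeriv (spatialFrame b i) g q + ⟪b i, v⟫ / 2)]
  rw [dirDeriv_prod_one b, liYau]
  linarith

end SpatialFrame

section Harnack

lemma le_add_mul_log_of_hasDerivAt {k k' : ℝ → ℝ} {a c t₁ t₂ : ℝ} (ht₁ : 0 < t₁) (ht : t₁ ≤ t₂)
    (hcont : ContinuousOn k (Icc t₁ t₂)) (hderiv : ∀ s ∈ Ioo t₁ t₂, HasDerivAt k (k' s) s)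
    (hge : ∀ s ∈ Ioo t₁ t₂, -(c / s) - a ≤ k' s) :
    k t₁ ≤ k t₂ + c * Real.log (t₂ / t₁) + a * (t₂ - t₁) := by
  have hlog : ContinuousOn Real.log (Icc t₁ t₂) :=
    Real.continuousOn_log.mono fun s hs => (ht₁.trans_le hs.1).ne'
  have hmono : MonotoneOn (fun s => k s + c * Real.log s + a * s) (Icc t₁ t₂) := by
    refine monotoneOn_of_hasDerivWithinAt_nonneg (f' := fun s => k' s + c * s⁻¹ + a * 1)
      (convex_Icc t₁ t₂) ((hcont.add (hlog.const_mul c)).add (by fun_prop)) ?_ ?_ <;>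
    rw [interior_Icc] <;> intro s hs
    · have hs₀ : s ≠ 0 := (ht₁.trans hs.1).ne'
      exact (((hderiv s hs).fun_add ((Real.hasDerivAt_log hs₀).const_mul c)).fun_add
        ((hasDerivAt_id s).const_mul a)).hasDerivWithinAt
    · rw [← div_eq_mul_inv]
      linarith [hge s hs]
  have hends := hmono (left_mem_Icc.2 ht) (right_mem_Icc.2 ht) ht
  rw [Real.log_div (ht₁.trans_le ht).ne' ht₁.ne']
  linarith

theorem le_add_mul_log_of_le_dirDeriv {E : Type*} [NormedAddCommGroup E] [NormedSpace ℝ E]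
    {T c : ℝ} {f : E × ℝ → ℝ} (hcont : ContinuousOn f (univ ×ˢ Ioc 0 T))
    (hdiff : ∀ q : E × ℝ, q.2 ∈ Ioo 0 T → DifferentiableAt ℝ f q)
    (hge : ∀ q : E × ℝ, q.2 ∈ Ioo 0 T → ∀ v : E,
      -(c / q.2) - ‖v‖ ^ 2 / 4 ≤ dirDeriv (v, 1) f q)
    (x₁ x₂ : E) {t₁ t₂ : ℝ} (ht₁ : 0 < t₁) (ht : t₁ < t₂) (ht₂ : t₂ ≤ T) :
    f (x₁, t₁) ≤ f (x₂, t₂) + c * Real.log (t₂ / t₁) + ‖x₂ - x₁‖ ^ 2 / (4 * (t₂ - t₁)) := by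
  have hlen : 0 < t₂ - t₁ := sub_pos.2 ht
  set v : E := (t₂ - t₁)⁻¹ • (x₂ - x₁) with hv
  set γ : ℝ → E × ℝ := fun s => (x₁ + (s - t₁) • v, s) with hγ
  have hγ_deriv (s : ℝ) : HasDerivAt γ (v, 1) s :=
    HasDerivAt.prodMk (by simpa using (((hasDerivAt_id s).sub_const t₁).smul_const v).const_add x₁)
      (hasDerivAt_id s)
  have hIoo : ∀ s ∈ Ioo t₁ t₂, s ∈ Ioo 0 T := fun s hs => ⟨ht₁.trans hs.1, hs.2.trans_le ht₂⟩
  have along_segment : f (γ t₁) ≤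
      f (γ t₂) + c * Real.log (t₂ / t₁) + ‖v‖ ^ 2 / 4 * (t₂ - t₁) :=
    le_add_mul_log_of_hasDerivAt ht₁ ht.le
      (hcont.comp (by fun_prop) fun s hs => ⟨mem_univ _, ht₁.trans_le hs.1, hs.2.trans ht₂⟩)
      (fun s hs => (hdiff (γ s) (hIoo s hs)).hasFDerivAt.comp_hasDerivAt s (hγ_deriv s))
      fun s hs => hge (γ s) (hIoo s hs) v
  have hγ₁ : γ t₁ = (x₁, t₁) := by simp [hγ]
  have hγ₂ : γ t₂ = (x₂, t₂) := by simp [hγ, hv, smul_smul, hlen.ne']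
  have henergy : ‖v‖ ^ 2 / 4 * (t₂ - t₁) = ‖x₂ - x₁‖ ^ 2 / (4 * (t₂ - t₁)) := by
    rw [hv, norm_smul, Real.norm_of_nonneg (by positivity)]
    field_simp
  rwa [hγ₁, hγ₂, henergy] at along_segment

variable {E : Type*} [NormedAddCommGroup E] [InnerProductSpace ℝ E] [FiniteDimensional ℝ E]
  {T : ℝ} {u : E → ℝ → ℝ}

theorem log_le_log_add_of_heat
    (hcont : ContinuousOn (fun p : E × ℝ => u p.1 p.2) (univ ×ˢ Ioc 0 T))
    (hsmooth : ContDiffOn ℝ 3 (fun p : E × ℝ => u p.1 p.2) (univ ×ˢ Ioo 0 T))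
    (hpos : ∀ x, ∀ t ∈ Ioc 0 T, 0 < u x t)
    (hheat : ∀ x, ∀ t ∈ Ioo 0 T, deriv (u x) t = Δ (fun y => u y t) x)
    (x₁ x₂ : E) {t₁ t₂ : ℝ} (ht₁ : 0 < t₁) (ht : t₁ < t₂) (ht₂ : t₂ ≤ T) :
    Real.log (u x₁ t₁) ≤ Real.log (u x₂ t₂) + Module.finrank ℝ E / 2 * Real.log (t₂ / t₁) +
      ‖x₂ - x₁‖ ^ 2 / (4 * (t₂ - t₁)) := by
  have hne : ∀ q : E × ℝ, q.2 ∈ Ioc 0 T → u q.1 q.2 ≠ 0 := fun q hq => (hpos q.1 q.2 hq).ne'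
  have hlog_smooth : ContDiffOn ℝ 3 (fun p : E × ℝ => Real.log (u p.1 p.2)) (univ ×ˢ Ioo 0 T) :=
    hsmooth.log fun q hq => hne q (Ioo_subset_Ioc_self hq.2)
  have hlog_heat : ∀ q : E × ℝ, q.2 ∈ Ioo 0 T →
      frameHeat (spatialFrame (stdOrthonormalBasis ℝ E)) timeDir
        (fun p : E × ℝ => Real.log (u p.1 p.2)) q =
      -gradInner (spatialFrame (stdOrthonormalBasis ℝ E))
        (fun p : E × ℝ => Real.log (u p.1 p.2)) (fun p : E × ℝ => Real.log (u p.1 p.2)) q := by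
    intro q hq
    have hu : ContDiffAt ℝ 2 (fun p : E × ℝ => u p.1 p.2) q :=
      (contDiffAt_of_mem_strip hsmooth hq).of_le (by norm_num)
    rw [frameHeat_log hu (hne q (Ioo_subset_Ioc_self hq)), frameHeat_spatialFrame _ hu,
      hheat q.1 q.2 hq, sub_self, zero_div, zero_sub]
  refine le_add_mul_log_of_le_dirDeriv (hcont.log fun q hq => hne q hq.2)
    (fun q hq => (contDiffAt_of_mem_strip hlog_smooth hq).differentiableAt three_ne_zero)
    (fun q hq v => ?_) x₁ x₂ ht₁ ht ht₂
  have liYau_le := mul_liYau_one_le hlog_smooth hlog_heat hq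
  rw [mul_comm, ← le_div_iff₀ hq.1, Fintype.card_fin] at liYau_le
  linarith [neg_liYau_one_sub_le_dirDeriv (stdOrthonormalBasis ℝ E)
    (fun p : E × ℝ => Real.log (u p.1 p.2)) q v]

theorem harnack_inequality_flat_general
    (hcont : ContinuousOn (fun p : E × ℝ => u p.1 p.2) (univ ×ˢ Ioc 0 T))
    (hsmooth : ContDiffOn ℝ 3 (fun p : E × ℝ => u p.1 p.2) (univ ×ˢ Ioo 0 T))
    (hpos : ∀ x, ∀ t ∈ Ioc 0 T, 0 < u x t)
    (hheat : ∀ x, ∀ t ∈ Ioo 0 T, deriv (u x) t = Δ (fun y => u y t) x)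
    {β : ℝ} (hβ : 1 ≤ β) (x₁ x₂ : E) {t₁ t₂ : ℝ} (ht₁ : 0 < t₁) (ht : t₁ < t₂) (ht₂ : t₂ ≤ T) :
    u x₁ t₁ * (t₂ / t₁) ^ (-(Module.finrank ℝ E / 2 * β)) *
      Real.exp (-(β * ‖x₂ - x₁‖ ^ 2 / (4 * (t₂ - t₁)))) ≤ u x₂ t₂ := by
  have hu₁ : 0 < u x₁ t₁ := hpos x₁ t₁ ⟨ht₁, ht.le.trans ht₂⟩
  have hu₂ : 0 < u x₂ t₂ := hpos x₂ t₂ ⟨ht₁.trans ht, ht₂⟩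
  have hratio : 0 < t₂ / t₁ := div_pos (ht₁.trans ht) ht₁
  have hcost : 0 ≤
      Module.finrank ℝ E / 2 * Real.log (t₂ / t₁) + ‖x₂ - x₁‖ ^ 2 / (4 * (t₂ - t₁)) := by
    have hlog : 0 ≤ Real.log (t₂ / t₁) := Real.log_nonneg ((one_le_div ht₁).2 ht.le)
    have : 0 < t₂ - t₁ := sub_pos.2 ht
    positivity
  have sharp := log_le_log_add_of_heat hcont hsmooth hpos hheat x₁ x₂ ht₁ ht ht₂
  rw [Real.rpow_def_of_pos hratio, mul_assoc, ← Real.exp_add, ← Real.exp_log hu₁, ← Real.exp_add,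
    ← Real.le_log_iff_exp_le hu₂]
  linear_combination sharp + le_mul_of_one_le_left hcost hβ

end Harnack

theorem laplacian_eq_innerProductSpace_laplacian {n : ℕ} {h : EuclideanSpace ℝ (Fin n) → ℝ}
    {x : EuclideanSpace ℝ (Fin n)} (hh : ContDiffAt ℝ 2 h x) : laplacian h x = Δ h x := by
  rw [laplacian_eq_frameLaplacian (EuclideanSpace.basisFun (Fin n) ℝ) hh]
  simp only [frameLaplacian, EuclideanSpace.basisFun_apply]
  rfl

/-- The Harnack inequality of Theorem 3.1 in the static Euclidean case: there is
`C′ = C′(n) > 0` such that every positive solution of the heat equation on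
`ℝⁿ × (0, T]` satisfies
`u(x₂,t₂) ≥ u(x₁,t₁)·(t₂/t₁)^{−C′β}·exp(−β‖x₂ − x₁‖²/(4(t₂ − t₁)))` for `β > 1`. -/
theorem harnack_inequality_flat (n : ℕ) (hn : 1 ≤ n) :
    ∃ C' : ℝ, 0 < C' ∧
      ∀ T : ℝ, 0 < T →
        ∀ u : EuclideanSpace ℝ (Fin n) → ℝ → ℝ,
          ContDiff ℝ (⊤ : ℕ∞) (fun p : EuclideanSpace ℝ (Fin n) × ℝ => u p.1 p.2) →
          (∀ x, ∀ t ∈ Set.Ioc 0 T, 0 < u x t) →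
          (∀ x, ∀ t ∈ Set.Ioc 0 T,
            deriv (fun s => u x s) t = laplacian (fun y => u y t) x) →
          ∀ β : ℝ, 1 < β →
            ∀ x₁ x₂ : EuclideanSpace ℝ (Fin n), ∀ t₁ t₂ : ℝ,
              0 < t₁ → t₁ < t₂ → t₂ ≤ T →
                u x₂ t₂ ≥ u x₁ t₁ * (t₂ / t₁) ^ (-(C' * β)) *
                  Real.exp (-(β * ‖x₂ - x₁‖ ^ 2 / (4 * (t₂ - t₁)))) := by
  refine ⟨n / 2, by positivity, fun T _ u hsmooth hpos hheat β hβ x₁ x₂ t₁ t₂ ht₁ ht ht₂ => ?_⟩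
  have hslice (t : ℝ) : ContDiff ℝ 2 fun y => u y t :=
    (hsmooth.of_le (by norm_cast)).comp (contDiff_id.prodMk contDiff_const)
  simpa using harnack_inequality_flat_general hsmooth.continuous.continuousOn
    (hsmooth.of_le (by norm_cast)).contDiffOn hpos
    (fun x t hts => (hheat x t (Ioo_subset_Ioc_self hts)).trans
      (laplacian_eq_innerProductSpace_laplacian (hslice t).contDiffAt)) hβ.le x₁ x₂ ht₁ ht ht₂
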